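/- arXiv:2011.05314 — 5 statements merged into one kernel-verified Lean document; each statement's English description precedes it below -/
import Mathlib

section
/- For every divergence tolerance ρ ≥ 0, the worst-case expected cost over the KL ambiguity set equals the value of the paper's dual reformulation: sup_{π ∈ P(ρ)} Σ_ω π_ω Q_ω = inf_{ζ > 0, μ ∈ ℝ} [ μ + ρζ + ζ · Σ_ω π°_ω · exp((Q_ω − μ)/ζ − 1) ]. -/
lemma kl_young (p q x : ℝ) (hp : 0 ≤ p) (hq : 0 < q) :
    p * (x + 1) ≤ p * Real.log (p / q) + q * Real.exp x := by
  rcases hp.eq_or_lt with h | h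
  · subst h
    simp only [zero_mul, zero_add]
    positivity
  · have h1 := Real.add_one_le_exp (x - Real.log (p / q))
    rw [Real.exp_sub, Real.exp_log (by positivity)] at h1
    have h2 := mul_le_mul_of_nonneg_left h1 h.le
    have h3 : p * (Real.exp x / (p / q)) = q * Real.exp x := by
      field_simp
    linarith

lemma kl_weak {S : ℕ} (π₀ : Fin S → ℝ)
    (hπ₀pos : ∀ ω, 0 < π₀ ω) (Q : Fin S → ℝ) (ρ : ℝ) (π : Fin S → ℝ) (h0 : ∀ ω, 0 ≤ π ω)
    (h1 : ∑ ω, π ω = 1) (h2 : (∑ ω, π ω * Real.log (π ω / π₀ ω)) ≤ ρ) (ζ μ : ℝ) (hζ : 0 < ζ) :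
    ∑ ω, π ω * Q ω ≤ μ + ρ * ζ + ζ * ∑ ω, π₀ ω * Real.exp ((Q ω - μ) / ζ - 1) := by
  have key : ∑ ω, π ω * (((Q ω - μ) / ζ - 1) + 1) ≤
      ∑ ω, (π ω * Real.log (π ω / π₀ ω) + π₀ ω * Real.exp ((Q ω - μ) / ζ - 1)) :=
    Finset.sum_le_sum fun ω _ => kl_young _ _ _ (h0 ω) (hπ₀pos ω)
  rw [Finset.sum_add_distrib] at key
  have e : ∑ ω, π ω * (((Q ω - μ) / ζ - 1) + 1) = (∑ ω, π ω * Q ω - μ) / ζ := by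
    have : ∑ ω, π ω * (((Q ω - μ) / ζ - 1) + 1) = ∑ ω, (π ω * Q ω - π ω * μ) / ζ :=
      Finset.sum_congr rfl fun ω _ => by ring
    rw [this, ← Finset.sum_div, Finset.sum_sub_distrib, ← Finset.sum_mul, h1, one_mul]
  rw [e, div_le_iff₀ hζ] at key
  nlinarith

/-- For every divergence tolerance ρ ≥ 0, the worst-case expected cost over
the KL ambiguity set equals the value of the paper's dual reformulation. -/
theorem kl_dro_dual_reformulation
    (S : ℕ) (hS : 1 ≤ S) (π₀ : Fin S → ℝ)
    (hπ₀pos : ∀ ω, 0 < π₀ ω) (hπ₀sum : ∑ ω, π₀ ω = 1)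
    (Q : Fin S → ℝ) (ρ : ℝ) (hρ : 0 ≤ ρ) :
    sSup {v : ℝ | ∃ π : Fin S → ℝ, (∀ ω, 0 ≤ π ω) ∧ (∑ ω, π ω = 1) ∧
        (∑ ω, π ω * Real.log (π ω / π₀ ω)) ≤ ρ ∧ v = ∑ ω, π ω * Q ω}
      = sInf {v : ℝ | ∃ ζ μ : ℝ, 0 < ζ ∧
        v = μ + ρ * ζ + ζ * ∑ ω, π₀ ω * Real.exp ((Q ω - μ) / ζ - 1)} := by
  set A := {v : ℝ | ∃ π : Fin S → ℝ, (∀ ω, 0 ≤ π ω) ∧ (∑ ω, π ω = 1) ∧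
        (∑ ω, π ω * Real.log (π ω / π₀ ω)) ≤ ρ ∧ v = ∑ ω, π ω * Q ω} with hA
  set B := {v : ℝ | ∃ ζ μ : ℝ, 0 < ζ ∧
        v = μ + ρ * ζ + ζ * ∑ ω, π₀ ω * Real.exp ((Q ω - μ) / ζ - 1)} with hB
  have hw : ∀ a ∈ A, ∀ b ∈ B, a ≤ b := by
    rintro a ⟨π, h0, h1, h2, rfl⟩ b ⟨ζ, μ, hζ, rfl⟩
    exact kl_weak π₀ hπ₀pos Q ρ π h0 h1 h2 ζ μ hζ
  have hAne : A.Nonempty := by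
    refine ⟨_, π₀, fun ω => (hπ₀pos ω).le, hπ₀sum, ?_, rfl⟩
    have : ∀ ω, π₀ ω / π₀ ω = 1 := fun ω => div_self (hπ₀pos ω).ne'
    simpa [this] using hρ
  have hBne : B.Nonempty := ⟨_, 1, 0, one_pos, rfl⟩
  obtain ⟨a0, ha0⟩ := id hAne
  obtain ⟨b0, hb0⟩ := id hBne
  have hAb : BddAbove A := ⟨b0, fun a ha => hw a ha b0 hb0⟩
  have hBb : BddBelow B := ⟨a0, fun b hb => hw a0 ha0 b hb⟩
  apply le_antisymm
  · exact csSup_le hAne fun a ha => le_csInf hBne fun b hb => hw a ha b hb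
  -- exponential tilting
  have hne : (Finset.univ : Finset (Fin S)).Nonempty := ⟨⟨0, hS⟩, Finset.mem_univ _⟩
  obtain ⟨Z, hZ⟩ : ∃ Z : ℝ → ℝ, Z = fun t => ∑ ω, π₀ ω * Real.exp (t * Q ω) := ⟨_, rfl⟩
  have hZpos : ∀ t, 0 < Z t := fun t => by
    rw [hZ]
    exact Finset.sum_pos (fun ω _ => mul_pos (hπ₀pos ω) (Real.exp_pos _)) hne
  have hZc : Continuous Z := by rw [hZ]; fun_prop
  have hZ0 : Z 0 = 1 := by simp [hZ, hπ₀sum]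
  obtain ⟨P, hP⟩ : ∃ P : ℝ → Fin S → ℝ, P = fun t ω => π₀ ω * Real.exp (t * Q ω) / Z t :=
    ⟨_, rfl⟩
  have hPpos : ∀ t ω, 0 < P t ω := fun t ω => by
    rw [hP]
    exact div_pos (mul_pos (hπ₀pos ω) (Real.exp_pos _)) (hZpos t)
  have hPsum : ∀ t, ∑ ω, P t ω = 1 := fun t => by
    rw [hP]
    simp only
    rw [← Finset.sum_div, div_eq_one_iff_eq (hZpos t).ne', hZ]
  have hPc : ∀ ω, Continuous fun t => P t ω := fun ω => by
    rw [hP]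
    exact Continuous.div (by fun_prop) hZc fun t => (hZpos t).ne'
  obtain ⟨E, hE⟩ : ∃ E : ℝ → ℝ, E = fun t => ∑ ω, P t ω * Q ω := ⟨_, rfl⟩
  have hEc : Continuous E := by
    rw [hE]
    exact continuous_finsetSum _ fun ω _ => (hPc ω).mul continuous_const
  obtain ⟨K, hK⟩ : ∃ K : ℝ → ℝ, K = fun t => t * E t - Real.log (Z t) := ⟨_, rfl⟩
  have hKc : Continuous K := by
    rw [hK]
    exact (continuous_id.mul hEc).sub (hZc.log fun t => (hZpos t).ne')
  have hK0 : K 0 = 0 := by simp [hK, hZ0]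
  have hKL : ∀ t, ∑ ω, P t ω * Real.log (P t ω / π₀ ω) = K t := fun t => by
    have h1 : ∀ ω, Real.log (P t ω / π₀ ω) = t * Q ω - Real.log (Z t) := fun ω => by
      have : P t ω / π₀ ω = Real.exp (t * Q ω) / Z t := by
        rw [hP]
        have := (hπ₀pos ω).ne'
        have := (hZpos t).ne'
        field_simp
      rw [this, Real.log_div (Real.exp_pos _).ne' (hZpos t).ne', Real.log_exp]
    have h2 : ∑ ω, P t ω * Real.log (P t ω / π₀ ω)
        = ∑ ω, (t * (P t ω * Q ω) - P t ω * Real.log (Z t)) :=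
      Finset.sum_congr rfl fun ω _ => by rw [h1]; ring
    rw [h2, Finset.sum_sub_distrib, ← Finset.mul_sum, ← Finset.sum_mul, hPsum, hK, hE, one_mul]
  have hKnn : ∀ t, 0 ≤ K t := fun t => by
    have h := Finset.sum_le_sum (s := Finset.univ)
      fun ω _ => kl_young (P t ω) (π₀ ω) 0 (hPpos t ω).le (hπ₀pos ω)
    rw [Finset.sum_add_distrib, hKL, ← Finset.sum_mul, ← Finset.sum_mul, hPsum, hπ₀sum,
      Real.exp_zero] at h
    linarith
  have hEA : ∀ t, K t ≤ ρ → E t ≤ sSup A := fun t ht =>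
    le_csSup hAb ⟨P t, fun ω => (hPpos t ω).le, hPsum t, by rw [hKL]; exact ht, by rw [hE]⟩
  have hD : ∀ t, 0 < t → sInf B ≤ E t + (ρ - K t) / t := fun t ht => by
    refine csInf_le hBb ⟨1 / t, (Real.log (Z t) - 1) / t, by positivity, ?_⟩
    have h1 : ∑ ω, π₀ ω * Real.exp ((Q ω - (Real.log (Z t) - 1) / t) / (1 / t) - 1) = 1 := by
      refine Eq.trans ?_ (hPsum t)
      refine Finset.sum_congr rfl fun ω _ => ?_
      have : (Q ω - (Real.log (Z t) - 1) / t) / (1 / t) - 1 = t * Q ω - Real.log (Z t) := by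
        field_simp
        ring
      rw [this, Real.exp_sub, Real.exp_log (hZpos t), hP]
      ring
    rw [h1, hK]
    field_simp
    ring
  rcases hρ.eq_or_lt with h | h
  · have h1 : ∀ t, 0 < t → sInf B ≤ E t := fun t ht => by
      have h2 := hD t ht
      have h3 : (ρ - K t) / t ≤ 0 :=
        div_nonpos_of_nonpos_of_nonneg (by have := hKnn t; linarith) ht.le
      linarith
    have h4 : Filter.Tendsto E (nhdsWithin 0 (Set.Ioi 0)) (nhds (E 0)) :=
      (hEc.tendsto 0).mono_left nhdsWithin_le_nhds
    refine le_trans (ge_of_tendsto h4 ?_) (hEA 0 (by rw [hK0]; exact hρ))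
    filter_upwards [self_mem_nhdsWithin] with t ht using h1 t ht
  · by_cases hex : ∃ t, 0 < t ∧ ρ ≤ K t
    · obtain ⟨t, ht, hKt⟩ := hex
      obtain ⟨s, hs, hKs⟩ := intermediate_value_Icc ht.le hKc.continuousOn
        (show ρ ∈ Set.Icc (K 0) (K t) from ⟨by rw [hK0]; exact hρ, hKt⟩)
      have hs0 : 0 < s := by
        rcases hs.1.eq_or_lt with h0 | h0
        · rw [← h0, hK0] at hKs
          linarith
        · exact h0
      have h2 := hD s hs0
      rw [hKs, sub_self, zero_div, add_zero] at h2
      exact h2.trans (hEA s hKs.le)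
    · push Not at hex
      refine le_of_forall_pos_le_add fun ε hε => ?_
      have ht : 0 < ρ / ε := by positivity
      have h1 := hD _ ht
      have h2 := hEA _ (hex _ ht).le
      have h3 : (ρ - K (ρ / ε)) / (ρ / ε) ≤ ε := by
        rw [div_le_iff₀ ht, mul_div_cancel₀ _ hε.ne']
        have := hKnn (ρ / ε)
        linarith
      linarith
end

section
/- Standard form of the KL-DRO dual: for every divergence tolerance ρ ≥ 0, sup_{π ∈ P(ρ)} Σ_ω π_ω Q_ω = inf_{ζ > 0} [ ρζ + ζ · log( Σ_ω π°_ω · exp(Q_ω/ζ) ) ]. -/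
open Finset in
lemma kl_gibbs {S : ℕ} (p q : Fin S → ℝ) (hp : ∀ i, 0 ≤ p i) (hq : ∀ i, 0 < q i)
    (hps : ∑ i, p i = 1) (hqs : ∑ i, q i = 1) :
    0 ≤ ∑ i, p i * Real.log (p i / q i) := by
  have h : ∑ i, (p i - q i) ≤ ∑ i, p i * Real.log (p i / q i) := by
    apply Finset.sum_le_sum
    intro i _
    rcases (hp i).eq_or_lt with h0 | h0
    · rw [← h0]; simp [(hq i).le]
    · have h1 := Real.one_sub_inv_le_log_of_pos (div_pos h0 (hq i))
      have h2 := mul_le_mul_of_nonneg_left h1 h0.le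
      have h3 : p i * (1 - (p i / q i)⁻¹) = p i - q i := by
        have := hq i
        field_simp
      linarith
  rw [Finset.sum_sub_distrib, hps, hqs] at h
  linarith

/-- partition function -/
noncomputable def klM {S : ℕ} (π₀ Q : Fin S → ℝ) (t : ℝ) : ℝ := ∑ i, π₀ i * Real.exp (t * Q i)

/-- tilted distribution -/
noncomputable def klP {S : ℕ} (π₀ Q : Fin S → ℝ) (t : ℝ) (i : Fin S) : ℝ :=
  π₀ i * Real.exp (t * Q i) / klM π₀ Q t

section
variable {S : ℕ} (π₀ Q : Fin S → ℝ)

lemma klM_pos (hpos : ∀ i, 0 < π₀ i) (hsum : ∑ i, π₀ i = 1) (t : ℝ) : 0 < klM π₀ Q t := by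
  apply Finset.sum_pos
  · intro i _
    exact mul_pos (hpos i) (Real.exp_pos _)
  · by_contra h
    rw [Finset.not_nonempty_iff_eq_empty] at h
    rw [h] at hsum
    simp at hsum

lemma klP_pos (hpos : ∀ i, 0 < π₀ i) (hsum : ∑ i, π₀ i = 1) (t : ℝ) (i : Fin S) :
    0 < klP π₀ Q t i :=
  div_pos (mul_pos (hpos i) (Real.exp_pos _)) (klM_pos π₀ Q hpos hsum t)

lemma klP_sum (hpos : ∀ i, 0 < π₀ i) (hsum : ∑ i, π₀ i = 1) (t : ℝ) :
    ∑ i, klP π₀ Q t i = 1 := by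
  unfold klP
  rw [← Finset.sum_div]
  exact div_self (klM_pos π₀ Q hpos hsum t).ne'

lemma kl_decomp (hpos : ∀ i, 0 < π₀ i) (hsum : ∑ i, π₀ i = 1) (t : ℝ) (p : Fin S → ℝ)
    (hp : ∀ i, 0 ≤ p i) (hps : ∑ i, p i = 1) :
    ∑ i, p i * Real.log (p i / π₀ i) =
      ∑ i, p i * Real.log (p i / klP π₀ Q t i) + t * ∑ i, p i * Q i - Real.log (klM π₀ Q t) := by
  have hM := klM_pos π₀ Q hpos hsum t
  have h : ∀ i, p i * Real.log (p i / π₀ i) =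
      p i * Real.log (p i / klP π₀ Q t i) + t * (p i * Q i) - p i * Real.log (klM π₀ Q t) := by
    intro i
    rcases (hp i).eq_or_lt with h0 | h0
    · rw [← h0]; simp
    · rw [Real.log_div h0.ne' (hpos i).ne', Real.log_div h0.ne' (klP_pos π₀ Q hpos hsum t i).ne']
      unfold klP
      rw [Real.log_div (mul_pos (hpos i) (Real.exp_pos _)).ne' hM.ne',
        Real.log_mul (hpos i).ne' (Real.exp_pos _).ne', Real.log_exp]
      ring
  rw [Finset.sum_congr rfl (fun i _ => h i), Finset.sum_sub_distrib, Finset.sum_add_distrib,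
    ← Finset.sum_mul, hps, ← Finset.mul_sum, one_mul]

lemma kl_weak_s3 (hpos : ∀ i, 0 < π₀ i) (hsum : ∑ i, π₀ i = 1) (t : ℝ) (p : Fin S → ℝ)
    (hp : ∀ i, 0 ≤ p i) (hps : ∑ i, p i = 1) :
    t * ∑ i, p i * Q i - Real.log (klM π₀ Q t) ≤ ∑ i, p i * Real.log (p i / π₀ i) := by
  have h1 := kl_gibbs p (klP π₀ Q t) hp (klP_pos π₀ Q hpos hsum t) hps (klP_sum π₀ Q hpos hsum t)
  rw [kl_decomp π₀ Q hpos hsum t p hp hps]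
  linarith

lemma kl_tilt (hpos : ∀ i, 0 < π₀ i) (hsum : ∑ i, π₀ i = 1) (t : ℝ) :
    ∑ i, klP π₀ Q t i * Real.log (klP π₀ Q t i / π₀ i) =
      t * ∑ i, klP π₀ Q t i * Q i - Real.log (klM π₀ Q t) := by
  rw [kl_decomp π₀ Q hpos hsum t _ (fun i => (klP_pos π₀ Q hpos hsum t i).le)
    (klP_sum π₀ Q hpos hsum t)]
  have : ∀ i, klP π₀ Q t i * Real.log (klP π₀ Q t i / klP π₀ Q t i) = 0 := by
    intro i
    rw [div_self (klP_pos π₀ Q hpos hsum t i).ne']; simp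
  simp [this]

lemma klM_cont : Continuous (klM π₀ Q) := by
  unfold klM
  fun_prop

lemma klA_cont (hpos : ∀ i, 0 < π₀ i) (hsum : ∑ i, π₀ i = 1) :
    Continuous (fun t => ∑ i, klP π₀ Q t i * Q i) := by
  unfold klP
  refine continuous_finsetSum _ fun i _ => ?_
  refine Continuous.mul (Continuous.div (by fun_prop) (klM_cont π₀ Q) ?_) continuous_const
  intro t
  exact (klM_pos π₀ Q hpos hsum t).ne'

lemma kl_strong (hpos : ∀ i, 0 < π₀ i) (hsum : ∑ i, π₀ i = 1) (ρ : ℝ) (hρ : 0 ≤ ρ)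
    (ε : ℝ) (hε : 0 < ε) :
    ∃ t : ℝ, 0 < t ∧ ∃ p : Fin S → ℝ, (∀ i, 0 ≤ p i) ∧ (∑ i, p i = 1) ∧
      (∑ i, p i * Real.log (p i / π₀ i)) ≤ ρ ∧
      ρ + Real.log (klM π₀ Q t) ≤ t * (∑ i, p i * Q i + ε) := by
  have hP0 := fun t i => (klP_pos π₀ Q hpos hsum t i).le
  have hPs := klP_sum π₀ Q hpos hsum
  have hT := kl_tilt π₀ Q hpos hsum
  have hK0 : ∀ t, 0 ≤ t * ∑ i, klP π₀ Q t i * Q i - Real.log (klM π₀ Q t) := by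
    intro t
    rw [← hT]
    exact kl_gibbs _ _ (hP0 t) hpos (hPs t) hsum
  have hA := klA_cont π₀ Q hpos hsum
  have hM0 : klM π₀ Q 0 = 1 := by simp [klM, hsum]
  have hp0 : klP π₀ Q 0 = π₀ := by
    funext i
    simp [klP, hM0]
  rcases hρ.eq_or_lt with h0 | h0
  · subst h0
    have hlt : ∀ᶠ t in nhds (0 : ℝ), ∑ i, klP π₀ Q t i * Q i < ∑ i, π₀ i * Q i + ε := by
      apply (hA.tendsto 0).eventually_lt_const
      rw [hp0]; linarith
    obtain ⟨δ, hδ, hb⟩ := Metric.eventually_nhds_iff.mp hlt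
    refine ⟨δ / 2, by linarith, π₀, fun i => (hpos i).le, hsum, ?_, ?_⟩
    · have : ∀ i, π₀ i * Real.log (π₀ i / π₀ i) = 0 := by
        intro i
        rw [div_self (hpos i).ne']; simp
      simp [this]
    · have h1 := hb (y := δ / 2) (by
        rw [Real.dist_eq, sub_zero, abs_of_pos (by linarith)]; linarith)
      have h2 := hK0 (δ / 2)
      have h3 := mul_lt_mul_of_pos_left h1 (show 0 < δ / 2 by linarith)
      linarith
  · by_cases hc : ∃ s, 0 < s ∧ ρ < s * ∑ i, klP π₀ Q s i * Q i - Real.log (klM π₀ Q s)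
    · obtain ⟨s, hs, hk⟩ := hc
      have hcont : Continuous
          (fun t => t * ∑ i, klP π₀ Q t i * Q i - Real.log (klM π₀ Q t)) :=
        (continuous_id.mul hA).sub
          ((klM_cont π₀ Q).log fun t => (klM_pos π₀ Q hpos hsum t).ne')
      have := intermediate_value_Icc hs.le hcont.continuousOn
      obtain ⟨t, ht, hte⟩ := this (show ρ ∈ _ from ⟨by simp [hM0, h0.le], hk.le⟩)
      simp only at hte
      have htp : 0 < t := by
        rcases ht.1.eq_or_lt with h | h
        · rw [← h, hM0] at hte
          simp at hte
          linarith
        · exact h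
      refine ⟨t, htp, klP π₀ Q t, hP0 t, hPs t, ?_, ?_⟩
      · rw [hT]; exact hte.le
      · have := mul_pos htp hε
        linarith
    · push Not at hc
      have ht : 0 < ρ / ε := div_pos h0 hε
      refine ⟨ρ / ε, ht, klP π₀ Q (ρ / ε), hP0 _, hPs _, ?_, ?_⟩
      · rw [hT]; exact hc _ ht
      · have h1 := hK0 (ρ / ε)
        rw [mul_add, div_mul_cancel₀ _ hε.ne']
        linarith

end

/-- Standard form of the KL-DRO dual:
sup over the ambiguity set equals inf over ζ > 0 of ρζ + ζ·log(Σ_ω π°_ω·exp(Q_ω/ζ)). -/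
theorem kl_dro_dual_standard_form
    (S : ℕ) (hS : 1 ≤ S) (π₀ : Fin S → ℝ)
    (hπ₀pos : ∀ ω, 0 < π₀ ω) (hπ₀sum : ∑ ω, π₀ ω = 1)
    (Q : Fin S → ℝ) (ρ : ℝ) (hρ : 0 ≤ ρ) :
    sSup {v : ℝ | ∃ π : Fin S → ℝ, (∀ ω, 0 ≤ π ω) ∧ (∑ ω, π ω = 1) ∧
        (∑ ω, π ω * Real.log (π ω / π₀ ω)) ≤ ρ ∧ v = ∑ ω, π ω * Q ω}
      = sInf {v : ℝ | ∃ ζ : ℝ, 0 < ζ ∧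
        v = ρ * ζ + ζ * Real.log (∑ ω, π₀ ω * Real.exp (Q ω / ζ))} := by
  have hM : ∀ ζ : ℝ, ∑ ω, π₀ ω * Real.exp (Q ω / ζ) = klM π₀ Q ζ⁻¹ := by
    intro ζ
    simp only [klM, div_eq_inv_mul]
  simp only [hM]
  have hweak : ∀ π : Fin S → ℝ, (∀ ω, 0 ≤ π ω) → (∑ ω, π ω = 1) →
      (∑ ω, π ω * Real.log (π ω / π₀ ω)) ≤ ρ → ∀ ζ : ℝ, 0 < ζ →
      ∑ ω, π ω * Q ω ≤ ρ * ζ + ζ * Real.log (klM π₀ Q ζ⁻¹) := by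
    intro π h1 h2 h3 ζ hζ
    have h4 := (kl_weak_s3 π₀ Q hπ₀pos hπ₀sum ζ⁻¹ π h1 h2).trans h3
    have h5 := mul_le_mul_of_nonneg_left h4 hζ.le
    rw [mul_sub, ← mul_assoc, mul_inv_cancel₀ hζ.ne', one_mul] at h5
    linarith
  have hπ₀kl : ∑ ω, π₀ ω * Real.log (π₀ ω / π₀ ω) ≤ ρ := by
    have : ∀ i, π₀ i * Real.log (π₀ i / π₀ i) = 0 := by
      intro i
      rw [div_self (hπ₀pos i).ne']; simp
    simpa [this] using hρ
  apply le_antisymm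
  · apply csSup_le
    · exact ⟨_, π₀, fun i => (hπ₀pos i).le, hπ₀sum, hπ₀kl, rfl⟩
    · rintro v ⟨π, h1, h2, h3, rfl⟩
      apply le_csInf
      · exact ⟨_, 1, one_pos, rfl⟩
      · rintro w ⟨ζ, hζ, rfl⟩
        exact hweak π h1 h2 h3 ζ hζ
  · apply le_of_forall_pos_le_add
    intro ε hε
    obtain ⟨t, ht, p, h1, h2, h3, h4⟩ := kl_strong π₀ Q hπ₀pos hπ₀sum ρ hρ ε hε
    have hle : ρ * t⁻¹ + t⁻¹ * Real.log (klM π₀ Q t) ≤ ∑ ω, p ω * Q ω + ε := by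
      have h5 := mul_le_mul_of_nonneg_left h4 (inv_pos.mpr ht).le
      rw [← mul_assoc, inv_mul_cancel₀ ht.ne', one_mul] at h5
      linarith
    have ha : sInf {v : ℝ | ∃ ζ : ℝ, 0 < ζ ∧ v = ρ * ζ + ζ * Real.log (klM π₀ Q ζ⁻¹)} ≤
        ρ * t⁻¹ + t⁻¹ * Real.log (klM π₀ Q t) := by
      apply csInf_le
      · refine ⟨∑ ω, π₀ ω * Q ω, ?_⟩
        rintro w ⟨ζ, hζ, rfl⟩
        exact hweak π₀ (fun i => (hπ₀pos i).le) hπ₀sum hπ₀kl ζ hζ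
      · exact ⟨t⁻¹, inv_pos.mpr ht, by rw [inv_inv]⟩
    have hb : ∑ ω, p ω * Q ω ≤ sSup {v : ℝ | ∃ π : Fin S → ℝ, (∀ ω, 0 ≤ π ω) ∧
        (∑ ω, π ω = 1) ∧ (∑ ω, π ω * Real.log (π ω / π₀ ω)) ≤ ρ ∧ v = ∑ ω, π ω * Q ω} := by
      apply le_csSup
      · refine ⟨ρ * 1 + 1 * Real.log (klM π₀ Q 1⁻¹), ?_⟩
        rintro w ⟨π, g1, g2, g3, rfl⟩
        exact hweak π g1 g2 g3 1 one_pos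
      · exact ⟨p, h1, h2, h3, rfl⟩
    linarith
end

section
/- Validity of the Benders optimality cut: for every q ∈ ℝ, every ζ, ζ′ > 0 and every μ, μ′ ∈ ℝ, writing K′ = (q − μ′)/ζ′, one has ζ · exp((q − μ)/ζ − 1) ≥ ζ′ · exp(K′ − 1) + (1 − K′) · exp(K′ − 1) · (ζ − ζ′) − exp(K′ − 1) · (μ − μ′); that is, the first-order cut generated at (ζ′, μ′) underestimates the per-scenario dual term everywhere. -/
/-- Validity of the Benders optimality cut: the first-order cut generated
at (ζ′, μ′) underestimates the per-scenario dual term everywhere. -/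
theorem benders_cut_valid (q ζ ζ' μ μ' : ℝ) (hζ : 0 < ζ) (hζ' : 0 < ζ') :
    ζ * Real.exp ((q - μ) / ζ - 1) ≥
      ζ' * Real.exp ((q - μ') / ζ' - 1)
        + (1 - (q - μ') / ζ') * Real.exp ((q - μ') / ζ' - 1) * (ζ - ζ')
        - Real.exp ((q - μ') / ζ' - 1) * (μ - μ') := by
  obtain ⟨K, hK⟩ : ∃ K, K = (q - μ) / ζ := ⟨_, rfl⟩
  obtain ⟨K', hK'⟩ : ∃ K', K' = (q - μ') / ζ' := ⟨_, rfl⟩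
  rw [← hK, ← hK']
  have h1 : K * ζ = q - μ := by rw [hK]; field_simp
  have h2 : K' * ζ' = q - μ' := by rw [hK']; field_simp
  have h3 : Real.exp (K - 1) = Real.exp (K' - 1) * Real.exp (K - K') := by
    rw [← Real.exp_add]; congr 1; ring
  have h4 := Real.add_one_le_exp (K - K')
  have h5 : ζ' * Real.exp (K' - 1) + (1 - K') * Real.exp (K' - 1) * (ζ - ζ')
      - Real.exp (K' - 1) * (μ - μ') = ζ * Real.exp (K' - 1) * (K - K' + 1) := by
    linear_combination Real.exp (K' - 1) * (h2 - h1)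
  rw [h5, h3, ← mul_assoc]
  exact mul_le_mul_of_nonneg_left h4 (by positivity)
end

section
/- The exponentially tilted (Gibbs) distribution is the worst-case distribution at its own divergence level: let ζ > 0, A = Σ_ω π°_ω · exp(Q_ω/ζ), and define π*_ω = π°_ω · exp(Q_ω/ζ) / A for each ω. Then π* ∈ Δ, and with ρ* = KL(π*‖π°), every π ∈ P(ρ*) satisfies Σ_ω π_ω Q_ω ≤ Σ_ω π*_ω Q_ω; i.e. π* attains the worst-case expected cost over P(ρ*). -/
/-- The exponentially tilted (Gibbs) distribution is the worst-case
distribution at its own divergence level. -/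
theorem gibbs_is_worst_case
    (S : ℕ) (hS : 1 ≤ S) (π₀ : Fin S → ℝ)
    (hπ₀pos : ∀ ω, 0 < π₀ ω) (hπ₀sum : ∑ ω, π₀ ω = 1)
    (Q : Fin S → ℝ) (ζ : ℝ) (hζ : 0 < ζ)
    (A : ℝ) (hA : A = ∑ ω, π₀ ω * Real.exp (Q ω / ζ))
    (πstar : Fin S → ℝ) (hπstar : ∀ ω, πstar ω = π₀ ω * Real.exp (Q ω / ζ) / A)
    (ρstar : ℝ) (hρstar : ρstar = ∑ ω, πstar ω * Real.log (πstar ω / π₀ ω)) :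
    ((∀ ω, 0 ≤ πstar ω) ∧ (∑ ω, πstar ω = 1)) ∧
    ∀ π : Fin S → ℝ, (∀ ω, 0 ≤ π ω) → (∑ ω, π ω = 1) →
      (∑ ω, π ω * Real.log (π ω / π₀ ω)) ≤ ρstar →
      ∑ ω, π ω * Q ω ≤ ∑ ω, πstar ω * Q ω := by
  have hne : Nonempty (Fin S) := ⟨⟨0, hS⟩⟩
  have hApos : 0 < A := by
    rw [hA]
    exact Finset.sum_pos (fun ω _ => mul_pos (hπ₀pos ω) (Real.exp_pos _)) Finset.univ_nonempty
  have hpos : ∀ ω, 0 < πstar ω := fun ω => by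
    rw [hπstar]
    exact div_pos (mul_pos (hπ₀pos ω) (Real.exp_pos _)) hApos
  have hsum : ∑ ω, πstar ω = 1 := by
    simp_rw [hπstar]
    rw [← Finset.sum_div, ← hA, div_self hApos.ne']
  have hlog : ∀ ω, Real.log (πstar ω / π₀ ω) = Q ω / ζ - Real.log A := fun ω => by
    have h1 : πstar ω / π₀ ω = Real.exp (Q ω / ζ) / A := by
      rw [hπstar]
      have := (hπ₀pos ω).ne'
      field_simp
    rw [h1, Real.log_div (Real.exp_pos _).ne' hApos.ne', Real.log_exp]
  have key : ∀ p : Fin S → ℝ, ∑ ω, p ω = 1 →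
      ∑ ω, p ω * (Q ω / ζ - Real.log A) = (∑ ω, p ω * Q ω) / ζ - Real.log A := by
    intro p hp
    simp_rw [mul_sub]
    rw [Finset.sum_sub_distrib, ← Finset.sum_mul, hp, one_mul, Finset.sum_div]
    simp_rw [mul_div_assoc]
  refine ⟨⟨fun ω => (hpos ω).le, hsum⟩, ?_⟩
  intro p hp0 hp1 hle
  have hterm : ∀ ω, p ω * (Q ω / ζ - Real.log A) + (p ω - πstar ω)
      ≤ p ω * Real.log (p ω / π₀ ω) := by
    intro ω
    rcases (hp0 ω).eq_or_lt with h | h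
    · rw [← h]
      have := hpos ω
      simp only [zero_mul]
      linarith
    · rw [← hlog ω, Real.log_div (hpos ω).ne' (hπ₀pos ω).ne',
        Real.log_div h.ne' (hπ₀pos ω).ne']
      have h2 := Real.log_le_sub_one_of_pos (div_pos (hpos ω) h)
      rw [Real.log_div (hpos ω).ne' h.ne'] at h2
      have h3 := mul_le_mul_of_nonneg_left h2 h.le
      have h4 : p ω * (πstar ω / p ω - 1) = πstar ω - p ω := by
        field_simp
      rw [h4] at h3
      linarith
  have hS1 := Finset.sum_le_sum (fun ω (_ : ω ∈ Finset.univ) => hterm ω)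
  rw [Finset.sum_add_distrib, Finset.sum_sub_distrib, hp1, hsum, key p hp1] at hS1
  simp_rw [hlog] at hρstar
  rw [key πstar hsum] at hρstar
  have hfin : (∑ ω, p ω * Q ω) / ζ ≤ (∑ ω, πstar ω * Q ω) / ζ := by linarith
  exact (div_le_div_iff_of_pos_right hζ).mp hfin
end

section
/- Convexity of the reduced dual objective in the multiplier: the function ζ ↦ ζ · log( Σ_ω π°_ω · exp(Q_ω/ζ) ) is convex on (0, ∞). -/
/-- Convexity of the reduced dual objective in the multiplier:
ζ ↦ ζ·log(Σ_ω π°_ω·exp(Q_ω/ζ)) is convex on (0, ∞). -/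
theorem reduced_dual_objective_convex
    (S : ℕ) (hS : 1 ≤ S) (π₀ : Fin S → ℝ)
    (hπ₀pos : ∀ ω, 0 < π₀ ω) (hπ₀sum : ∑ ω, π₀ ω = 1)
    (Q : Fin S → ℝ) :
    ConvexOn ℝ (Set.Ioi (0 : ℝ))
      (fun ζ : ℝ => ζ * Real.log (∑ ω, π₀ ω * Real.exp (Q ω / ζ))) := by
  have hpos : ∀ x : ℝ, 0 < ∑ ω, π₀ ω * Real.exp (Q ω / x) := fun x =>
    Finset.sum_pos (fun ω _ => mul_pos (hπ₀pos ω) (Real.exp_pos _)) ⟨⟨0, hS⟩, Finset.mem_univ _⟩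
  -- normalisation: subtracting the log-partition function makes the sum equal to one
  have hnorm : ∀ x : ℝ, ∑ ω, π₀ ω * Real.exp
      (Q ω / x - Real.log (∑ ω, π₀ ω * Real.exp (Q ω / x))) = 1 := by
    intro x
    simp_rw [Real.exp_sub, Real.exp_log (hpos x), ← mul_div_assoc]
    rw [← Finset.sum_div, div_self (hpos x).ne']
  refine ⟨convex_Ioi 0, ?_⟩
  intro x hx y hy a b ha hb hab
  have hz : 0 < a * x + b * y := (convex_Ioi (0 : ℝ)) hx hy ha hb hab
  have hx0 : 0 < x := hx
  have hy0 : 0 < y := hy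
  simp only [smul_eq_mul]
  have hnx := hnorm x
  have hny := hnorm y
  set A := Real.log (∑ ω, π₀ ω * Real.exp (Q ω / x))
  set B := Real.log (∑ ω, π₀ ω * Real.exp (Q ω / y))
  set z := a * x + b * y with hzdef
  have hs : a * x / z + b * y / z = 1 := by
    rw [← add_div, ← hzdef, div_self hz.ne']
  have hkey : ∑ ω, π₀ ω * Real.exp (Q ω / z - (a * (x * A) + b * (y * B)) / z) ≤ 1 := by
    calc _ ≤ ∑ ω, (a * x / z * (π₀ ω * Real.exp (Q ω / x - A))
          + b * y / z * (π₀ ω * Real.exp (Q ω / y - B))) := by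
          refine Finset.sum_le_sum fun ω _ => ?_
          have h := convexOn_exp.2 (Set.mem_univ (Q ω / x - A)) (Set.mem_univ (Q ω / y - B))
            (by positivity : 0 ≤ a * x / z) (by positivity : 0 ≤ b * y / z) hs
          simp only [smul_eq_mul] at h
          have e : a * x / z * (Q ω / x - A) + b * y / z * (Q ω / y - B)
              = Q ω / z - (a * (x * A) + b * (y * B)) / z := by
            have hb' : b = 1 - a := by linarith
            field_simp
            rw [hb']
            ring
          rw [e] at h
          have := mul_le_mul_of_nonneg_left h (hπ₀pos ω).le
          linarith
      _ = 1 := by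
          rw [Finset.sum_add_distrib, ← Finset.mul_sum, ← Finset.mul_sum, hnx, hny]
          linarith
  simp_rw [Real.exp_sub, ← mul_div_assoc] at hkey
  rw [← Finset.sum_div, div_le_one (Real.exp_pos _), ← Real.log_le_iff_le_exp (hpos z),
    le_div_iff₀ hz] at hkey
  linarith
end
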